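/- arXiv:1505.03697 — 2 statements merged into one kernel-verified Lean document; each statement's English description precedes it below -/
import Mathlib

section
/- Let G and H be abelian groups with tiles T ⊂ G and A ⊂ B ⊂ H. Suppose G^k × H^ℓ × B^d is (T^{×k}, A^{×(ℓ+d)})-tilable, and G^u × H^v is (T^{×u}, B^{×v})-tilable. Then G^{du+k} × H^{dv+ℓ} is (T^{×(du+k)}, A^{×(dv+ℓ)})-tilable. -/
universe u

def IsCopyD {ι : Type*} [DecidableEq ι] {G : ι → Type*}
    [∀ i, AddCommGroup (G i)] (T : ∀ i, Set (G i))
    (S : Set (∀ i, G i)) : Prop :=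
  ∃ (j : ι) (y : ∀ i, G i),
    S = {z | ∃ t ∈ T j, z = Function.update y j (y j + t)}

def TilableD {ι : Type*} [DecidableEq ι] {G : ι → Type*}
    [∀ i, AddCommGroup (G i)] (T : ∀ i, Set (G i))
    (X : Set (∀ i, G i)) : Prop :=
  ∃ P : Set (Set (∀ i, G i)),
    (∀ S ∈ P, IsCopyD T S) ∧ P.PairwiseDisjoint id ∧ ⋃₀ P = X

instance sumElimAddCommGroup {α β : Type*} (F : α → Type u) (G : β → Type u)
    [∀ a, AddCommGroup (F a)] [∀ b, AddCommGroup (G b)] :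
    ∀ i : α ⊕ β, AddCommGroup (Sum.elim F G i) := fun i =>
  match i with
  | .inl a => inferInstanceAs (AddCommGroup (F a))
  | .inr b => inferInstanceAs (AddCommGroup (G b))

/-! Tile a product `∏ i, Y i` by the products of one piece from each tiling of `Y i`. If one of the
chosen pieces is a translate of `T`, the product of pieces is a union of translates of `T` parallel
to it. Otherwise every chosen piece is a translate of `B` on some axis; together with `G^K × H^L`
these pieces form a translate of an embedded copy of `(G^K × H^L) × B^D`, where translates of `T`
and `A` remain such because the embedding carries axes to axes. -/

open Function Set
open scoped Pointwise

/-- `X` is a disjoint union of translates of members of `𝒯`. Since a copy of a tile placed in one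
factor of a product is a translate of a subset of that product, this covers the tilings of
`TilableD` without reference to coordinates. -/
def TilableBy {E : Type*} [AddGroup E] (𝒯 : Set (Set E)) (X : Set E) : Prop :=
  ∃ P : Set (Set E), (∀ S ∈ P, ∃ τ ∈ 𝒯, ∃ y : E, S = y +ᵥ τ) ∧ P.PairwiseDisjoint id ∧ ⋃₀ P = X

theorem update_add_single {ι : Type*} [DecidableEq ι] {G : ι → Type*} [∀ i, AddZeroClass (G i)]
    (y : ∀ i, G i) (j : ι) (a b : G j) :
    update y j a + Pi.single j b = update y j (a + b) := by
  rw [Pi.single, ← update_add, add_zero]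

theorem vadd_image_prod_pi {E D : Type*} [AddZeroClass E] {H W : D → Type*} [∀ i, Add (W i)]
    (φ : ∀ i, H i → W i) (y : ∀ i, W i) (X : Set E) (B : ∀ i, Set (H i)) :
    ((0, y) : E × ∀ i, W i) +ᵥ Prod.map id (Pi.map φ) '' (X ×ˢ univ.pi B) =
      X ×ˢ univ.pi fun i => y i +ᵥ φ i '' B i :=
  calc
    _ = Prod.map (0 + ·) (Pi.map fun i => (y i + ·)) '' (X ×ˢ univ.pi fun i => φ i '' B i) := by
      rw [prodMap_image_prod, piMap_image_univ_pi, image_id]; rfl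
    _ = X ×ˢ univ.pi fun i => y i +ᵥ φ i '' B i := by
      simp only [prodMap_image_prod, piMap_image_univ_pi, zero_add, image_id']; rfl

namespace TilableBy

variable {E F : Type*} [AddGroup E] [AddGroup F] {𝒯 : Set (Set E)}

protected theorem iUnion {ι : Type*} {X : ι → Set E} (hX : Pairwise (Disjoint on X))
    (h : ∀ i, TilableBy 𝒯 (X i)) : TilableBy 𝒯 (⋃ i, X i) := by
  choose P hcopy hdisj hcover using h
  refine ⟨⋃ i, P i, fun S hS => ?_, ?_, ?_⟩
  · obtain ⟨i, hi⟩ := mem_iUnion.1 hS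
    exact hcopy i S hi
  · have subset_of_mem : ∀ {i S}, S ∈ P i → S ⊆ X i := fun {i} _ hS =>
      hcover i ▸ subset_sUnion_of_mem hS
    intro S hS S' hS' hne
    obtain ⟨i, hi⟩ := mem_iUnion.1 hS
    obtain ⟨i', hi'⟩ := mem_iUnion.1 hS'
    obtain rfl | hii' := eq_or_ne i i'
    · exact hdisj i hi hi' hne
    · exact (hX hii').mono (subset_of_mem hi) (subset_of_mem hi')
  · simp_rw [sUnion_iUnion, hcover]

theorem of_fibers {α : Type*} {X : Set E} (r : E → α)
    (h : ∀ x ∈ X, ∃ τ ∈ 𝒯, ∃ y : E, X ∩ r ⁻¹' {r x} = y +ᵥ τ) : TilableBy 𝒯 X := by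
  refine ⟨(fun x => X ∩ r ⁻¹' {r x}) '' X, forall_mem_image.2 h, ?_, ?_⟩
  · rintro _ ⟨x, -, rfl⟩ _ ⟨x', -, rfl⟩ hne
    refine disjoint_left.2 fun z hz hz' => hne ?_
    simp only [← show r z = r x from hz.2, ← show r z = r x' from hz'.2]
  · refine subset_antisymm (sUnion_subset <| forall_mem_image.2 fun _ _ => inter_subset_left) ?_
    exact fun x hx => ⟨_, mem_image_of_mem _ hx, hx, rfl⟩

theorem vadd_image {𝒮 : Set (Set F)} {X : Set E} (h : TilableBy 𝒯 X) (c : F) (f : E →+ F)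
    (hf : Injective f) (h𝒮 : ∀ τ ∈ 𝒯, f '' τ ∈ 𝒮) : TilableBy 𝒮 (c +ᵥ f '' X) := by
  obtain ⟨P, hcopy, hdisj, rfl⟩ := h
  refine ⟨(fun S => c +ᵥ f '' S) '' P, forall_mem_image.2 fun S hS => ?_, ?_, ?_⟩
  · obtain ⟨τ, hτ, y, rfl⟩ := hcopy S hS
    exact ⟨f '' τ, h𝒮 τ hτ, c + f y, by rw [image_vadd_distrib, vadd_vadd]⟩
  · rintro _ ⟨S, hS, rfl⟩ _ ⟨S', hS', rfl⟩ hne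
    have hSS' : Disjoint S S' := hdisj hS hS' (mt (congrArg fun S => c +ᵥ f '' S) hne)
    exact (disjoint_image_iff (AddAction.injective c)).2 ((disjoint_image_iff hf).2 hSS')
  · rw [sUnion_image, sUnion_eq_biUnion, image_iUnion₂, vadd_set_iUnion₂]

theorem image_addEquiv {𝒮 : Set (Set F)} {X : Set E} (h : TilableBy 𝒯 X) (e : E ≃+ F)
    (h𝒮 : ∀ τ ∈ 𝒯, e '' τ ∈ 𝒮) : TilableBy 𝒮 (e '' X) := by
  simpa using h.vadd_image 0 (e : E →+ F) e.injective h𝒮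

section Product

variable {D : Type*} [DecidableEq D] {W H : D → Type*}
  [∀ i, AddGroup (W i)] [∀ i, AddGroup (H i)] {𝒯 : Set (Set (E × ∀ i, W i))}

theorem prod_pi_of_vadd {X : Set E} {f : ∀ i, Set (W i)} {i : D} {τ : Set (W i)} {y : W i}
    (hf : f i = y +ᵥ τ) (hτ : (fun w => (0, Pi.single i w)) '' τ ∈ 𝒯) :
    TilableBy 𝒯 (X ×ˢ univ.pi f) := by
  refine of_fibers (fun p => (p.1, update p.2 i y)) ?_
  rintro ⟨x, w⟩ ⟨hx, hw⟩
  refine ⟨_, hτ, (x, update w i y), ?_⟩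
  have update_mem_pi {a : W i} (ha : a ∈ f i) : update w i a ∈ univ.pi f := by
    rw [update_mem_pi_iff_of_mem hw]
    exact fun _ => ha
  ext ⟨x', w'⟩
  constructor
  · rintro ⟨⟨-, hw'⟩, hr⟩
    obtain ⟨rfl, hww'⟩ : x' = x ∧ update w' i y = update w i y := Prod.ext_iff.1 hr
    obtain ⟨a, ha, hya⟩ : w' i ∈ y +ᵥ τ := hf ▸ hw' i (mem_univ i)
    refine ⟨_, mem_image_of_mem _ ha, Prod.ext (add_zero x') ?_⟩
    calc update w i y + Pi.single i a = update w' i y + Pi.single i a := by rw [hww']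
      _ = update w' i (w' i) := by rw [update_add_single, ← hya]; rfl
      _ = w' := update_eq_self i w'
  · rintro ⟨_, ⟨a, ha, rfl⟩, hp⟩
    obtain ⟨rfl, rfl⟩ : x = x' ∧ update w i (y + a) = w' := by
      simpa [update_add_single] using hp
    exact ⟨⟨hx, update_mem_pi (hf ▸ vadd_mem_vadd_set ha)⟩, by simp⟩

theorem prod_pi {V : D → Type*} {𝒜 : Set (Set (E × ∀ i, H i))} {𝒮 : ∀ i, Set (Set (W i))}
    {X : Set E} {B : ∀ i, Set (H i)} {Y : ∀ i, Set (W i)} {ψ : ∀ i, V i → H i →+ W i}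
    (hψ : ∀ i b, Injective (ψ i b))
    (hB : TilableBy 𝒜 (X ×ˢ univ.pi B))
    (hY : ∀ i, TilableBy (𝒮 i ∪ range fun b => ψ i b '' B i) (Y i))
    (h𝒮 : ∀ i, ∀ τ ∈ 𝒮 i, (fun w => ((0 : E), Pi.single i w)) '' τ ∈ 𝒯)
    (h𝒜 : ∀ b : ∀ i, V i, ∀ τ ∈ 𝒜,
      Prod.map id (Pi.map fun i => ψ i (b i)) '' τ ∈ 𝒯) :
    TilableBy 𝒯 (X ×ˢ univ.pi Y) := by
  choose P hcopy hdisj hcover using hY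
  have hblocks : X ×ˢ univ.pi Y = ⋃ f : ∀ i, P i, X ×ˢ univ.pi fun i => (f i : Set (W i)) := by
    rw [← prod_iUnion, iUnion_univ_pi]
    simp_rw [← sUnion_eq_iUnion, hcover]
  rw [hblocks]
  refine TilableBy.iUnion (fun f f' hne => ?_) fun f => ?_
  · obtain ⟨i, hi⟩ := Function.ne_iff.1 hne
    exact Disjoint.set_prod_right (disjoint_univ_pi.2 ⟨i, hdisj i (f i).2 (f' i).2
      (Subtype.coe_injective.ne hi)⟩) _ _
  by_cases hf : ∃ i, ∃ τ ∈ 𝒮 i, ∃ y : W i, (f i : Set (W i)) = y +ᵥ τ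
  · obtain ⟨i, τ, hτ, y, hfi⟩ := hf
    exact prod_pi_of_vadd hfi (h𝒮 i τ hτ)
  · have hcopyB : ∀ i, ∃ b y, (f i : Set (W i)) = y +ᵥ ψ i b '' B i := fun i => by
      obtain ⟨τ, hτ | ⟨b, rfl⟩, y, hy⟩ := hcopy i _ (f i).2
      · exact absurd ⟨i, τ, hτ, y, hy⟩ hf
      · exact ⟨b, y, hy⟩
    choose b y hby using hcopyB
    let Ψ : (E × ∀ i, H i) →+ E × ∀ i, W i :=
      (AddMonoidHom.id E).prodMap (AddMonoidHom.piMap fun i => ψ i (b i))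
    have hΨ : Injective Ψ := injective_id.prodMap (Injective.piMap fun i => hψ i (b i))
    have hblock : X ×ˢ univ.pi (fun i => (f i : Set (W i))) =
        ((0, y) : E × ∀ i, W i) +ᵥ Ψ '' (X ×ˢ univ.pi B) := by
      simp_rw [hby]
      exact (vadd_image_prod_pi ..).symm
    exact hblock ▸ hB.vadd_image (0, y) Ψ hΨ (h𝒜 b)

end Product
end TilableBy

theorem TilableD.congr {ι : Type*} [DecidableEq ι] {G : ι → Type*} [∀ i, AddCommGroup (G i)]
    {S T : ∀ i, Set (G i)} {X : Set (∀ i, G i)} (h : TilableD S X) (hST : ∀ i, S i = T i) :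
    TilableD T X :=
  funext hST ▸ h

theorem tilableD_iff_tilableBy {ι : Type*} [DecidableEq ι] {G : ι → Type*}
    [∀ i, AddCommGroup (G i)] (T : ∀ i, Set (G i)) (X : Set (∀ i, G i)) :
    TilableD T X ↔ TilableBy (range fun j => Pi.single j '' T j) X := by
  have isCopyD_iff (S : Set (∀ i, G i)) :
      IsCopyD T S ↔ ∃ τ ∈ range fun j => Pi.single j '' T j, ∃ y : ∀ i, G i, S = y +ᵥ τ := by
    have update_copy_eq (j : ι) (y : ∀ i, G i) :
        {z | ∃ t ∈ T j, z = update y j (y j + t)} = y +ᵥ Pi.single j '' T j := by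
      ext z
      simp only [← update_add_single, update_eq_self, mem_vadd_set, exists_mem_image, vadd_eq_add,
        mem_ofPred_eq, eq_comm]
    simp only [IsCopyD, exists_range_iff, update_copy_eq]
  simp only [TilableD, TilableBy, isCopyD_iff]

section Coordinates

variable {G H : Type u} [AddCommGroup G] [AddCommGroup H]

/-- The family of tiles on `G^ι × H^κ` with `T` in each `G`-factor and `A` in each `H`-factor. -/
def sumTiles {ι κ : Type*} (T : Set G) (A : Set H) :
    ∀ s : ι ⊕ κ, Set (Sum.elim (fun _ : ι => G) (fun _ : κ => H) s) :=
  Sum.rec (fun _ => T) (fun _ => A)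

/-- The subsets of `G^ι × H^κ` consisting of `T` on one `G`-axis or of `A` on one `H`-axis. Using
a pair of non-dependent functions in place of a function on `ι ⊕ κ` avoids a dependent codomain. -/
def axisTiles (ι κ : Type*) [DecidableEq ι] [DecidableEq κ] (T : Set G) (A : Set H) :
    Set (Set ((ι → G) × (κ → H))) :=
  (range fun i => (fun t => (Pi.single i t, 0)) '' T) ∪
    range fun j => (fun t => (0, Pi.single j t)) '' A

/-- The coordinates of a point of `∏ (s : ι ⊕ κ)` as a pair of functions, reindexed along
`e₁ : I ≃ ι` and `e₂ : J ≃ κ`. -/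
def sumCoords {I J ι κ : Type*} (e₁ : I ≃ ι) (e₂ : J ≃ κ) :
    (∀ s : ι ⊕ κ, Sum.elim (fun _ : ι => G) (fun _ : κ => H) s) ≃+ (I → G) × (J → H) where
  toFun z := (fun i => z (.inl (e₁ i)), fun j => z (.inr (e₂ j)))
  invFun p := fun s => match s with
    | .inl i => p.1 (e₁.symm i)
    | .inr j => p.2 (e₂.symm j)
  left_inv z := by
    funext s
    obtain i | j := s
    · exact congrArg (fun i => z (.inl i)) (e₁.apply_symm_apply i)
    · exact congrArg (fun j => z (.inr j)) (e₂.apply_symm_apply j)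
  right_inv p := by simp
  map_add' _ _ := rfl

section

variable {I J ι κ : Type*} [DecidableEq ι] [DecidableEq κ] (e₁ : I ≃ ι) (e₂ : J ≃ κ)

theorem sumCoords_single_inl [DecidableEq I] (i : I) (t : G) :
    sumCoords (G := G) (H := H) e₁ e₂ (Pi.single (.inl (e₁ i)) t) = (Pi.single i t, 0) :=
  Prod.ext
    (update_comp_eq_of_injective' (0 : ∀ s : ι ⊕ κ, Sum.elim (fun _ => G) (fun _ => H) s)
      (f := fun i => .inl (e₁ i)) (Sum.inl_injective.comp e₁.injective) i t)
    (update_comp_eq_of_forall_ne' (0 : ∀ s : ι ⊕ κ, Sum.elim (fun _ => G) (fun _ => H) s)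
      (f := fun j => .inr (e₂ j)) (i := .inl (e₁ i)) t fun _ => Sum.inr_ne_inl)

theorem sumCoords_single_inr [DecidableEq J] (j : J) (t : H) :
    sumCoords (G := G) (H := H) e₁ e₂ (Pi.single (.inr (e₂ j)) t) = (0, Pi.single j t) :=
  Prod.ext
    (update_comp_eq_of_forall_ne' (0 : ∀ s : ι ⊕ κ, Sum.elim (fun _ => G) (fun _ => H) s)
      (f := fun i => .inl (e₁ i)) (i := .inr (e₂ j)) t fun _ => Sum.inl_ne_inr)
    (update_comp_eq_of_injective' (0 : ∀ s : ι ⊕ κ, Sum.elim (fun _ => G) (fun _ => H) s)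
      (f := fun j => .inr (e₂ j)) (Sum.inr_injective.comp e₂.injective) j t)

variable (T : Set G) (A : Set H)

theorem sumCoords_image_single_inl [DecidableEq I] (i : I) :
    sumCoords e₁ e₂ '' (Pi.single (.inl (e₁ i)) '' sumTiles T A (.inl (e₁ i))) =
      (fun t => (Pi.single i t, (0 : J → H))) '' T :=
  (image_image ..).trans (image_congr fun t _ => sumCoords_single_inl e₁ e₂ i t)

theorem sumCoords_image_single_inr [DecidableEq J] (j : J) :
    sumCoords e₁ e₂ '' (Pi.single (.inr (e₂ j)) '' sumTiles T A (.inr (e₂ j))) =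
      (fun t => ((0 : I → G), Pi.single j t)) '' A :=
  (image_image ..).trans (image_congr fun t _ => sumCoords_single_inr e₁ e₂ j t)

theorem tilableD_sumTiles_iff [DecidableEq I] [DecidableEq J]
    (X : Set (∀ s : ι ⊕ κ, Sum.elim (fun _ : ι => G) (fun _ : κ => H) s)) :
    TilableD (sumTiles T A) X ↔ TilableBy (axisTiles I J T A) (sumCoords e₁ e₂ '' X) := by
  rw [tilableD_iff_tilableBy]
  refine ⟨fun h => h.image_addEquiv (sumCoords e₁ e₂) ?_, fun h => ?_⟩
  · rintro _ ⟨i | j, rfl⟩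
    · obtain ⟨i, rfl⟩ := e₁.surjective i
      exact .inl ⟨i, (sumCoords_image_single_inl e₁ e₂ T A i).symm⟩
    · obtain ⟨j, rfl⟩ := e₂.surjective j
      exact .inr ⟨j, (sumCoords_image_single_inr e₁ e₂ T A j).symm⟩
  · have symm_image_image (Y : Set (∀ s : ι ⊕ κ, Sum.elim (fun _ => G) (fun _ => H) s)) :
        (sumCoords e₁ e₂).symm '' (sumCoords e₁ e₂ '' Y) = Y :=
      (sumCoords e₁ e₂).toEquiv.symm_image_image Y
    rw [← symm_image_image X]
    refine h.image_addEquiv (sumCoords e₁ e₂).symm ?_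
    rintro _ (⟨i, rfl⟩ | ⟨j, rfl⟩)
    · exact ⟨.inl (e₁ i), by beta_reduce; rw [← sumCoords_image_single_inl e₁ e₂, symm_image_image]⟩
    · exact ⟨.inr (e₂ j), by beta_reduce; rw [← sumCoords_image_single_inr e₁ e₂, symm_image_image]⟩

end

section Blocks

variable {K L D U V : Type*}

/-- Splits `G^K × H^(L ⊕ D)` as `(G^K × H^L) × H^D`. -/
@[simps]
def splitEquiv : (K → G) × (L ⊕ D → H) ≃+ ((K → G) × (L → H)) × (D → H) where
  toFun p := ((p.1, p.2 ∘ .inl), p.2 ∘ .inr)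
  invFun q := (q.1.1, Sum.elim q.1.2 q.2)
  left_inv p := by simp
  right_inv _ := rfl
  map_add' _ _ := rfl

/-- Assembles a point of `G^K × H^L` and a `D`-indexed family of blocks in `G^U × H^V` into a point
of `G^(D × U ⊕ K) × H^(D × V ⊕ L)`. -/
@[simps]
def blockEquiv : ((K → G) × (L → H)) × (D → (U → G) × (V → H)) ≃+
    (D × U ⊕ K → G) × (D × V ⊕ L → H) where
  toFun q := (Sum.elim (fun a => (q.2 a.1).1 a.2) q.1.1, Sum.elim (fun b => (q.2 b.1).2 b.2) q.1.2)
  invFun p := ((p.1 ∘ .inr, p.2 ∘ .inr),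
    fun i => (fun a => p.1 (.inl (i, a)), fun b => p.2 (.inl (i, b))))
  left_inv _ := rfl
  right_inv p := by ext (_ | _) <;> rfl
  map_add' p q := by ext (_ | _) <;> rfl

/-- The inclusion of `H` in `G^U × H^V` as the `H`-axis `b`. -/
def axisHom [DecidableEq V] (b : V) : H →+ (U → G) × (V → H) :=
  (AddMonoidHom.inr (U → G) (V → H)).comp (AddMonoidHom.single (fun _ => H) b)

theorem axisHom_injective [DecidableEq V] (b : V) :
    Injective (axisHom b : H →+ (U → G) × (V → H)) :=
  (Prod.mk_right_injective 0).comp (Pi.single_injective (M := fun _ => H) b)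

/-- The map `(G^K × H^L) × H^D → (G^K × H^L) × (G^U × H^V)^D` placing the `i`-th of the last `D`
coordinates on the `H`-axis `b i` of the `i`-th block. -/
def axisEmbedding [DecidableEq V] (b : D → V) :
    ((K → G) × (L → H)) × (D → H) → ((K → G) × (L → H)) × (D → (U → G) × (V → H)) :=
  Prod.map id (Pi.map fun i => axisHom (b i))

theorem blockEquiv_single_fst [DecidableEq K] [DecidableEq D] [DecidableEq U]
    (i : D) (a : U) (t : G) :
    blockEquiv ((0 : (K → G) × (L → H)), Pi.single i (Pi.single a t, (0 : V → H))) =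
      (Pi.single (.inl (i, a)) t, 0) := by
  refine Prod.ext (funext ?_) (funext ?_)
  · rintro (⟨i', a'⟩ | k)
    · obtain rfl | hi := eq_or_ne i' i <;> simp [Pi.single_apply, *]
    · simp
  · rintro (⟨i', b⟩ | l)
    · obtain rfl | hi := eq_or_ne i' i <;> simp [*]
    · simp

theorem blockEquiv_axisEmbedding_single_fst [DecidableEq K] [DecidableEq D] [DecidableEq U]
    [DecidableEq V] (b : D → V) (k : K) (t : G) :
    blockEquiv (axisEmbedding (U := U) b (splitEquiv (L := L) (H := H) (Pi.single k t, 0))) =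
      (Pi.single (.inr k) t, 0) := by
  refine Prod.ext (funext ?_) (funext ?_) <;> rintro (_ | _) <;>
    simp [axisEmbedding, axisHom, Pi.single_apply]

theorem blockEquiv_axisEmbedding_single_inl [DecidableEq L] [DecidableEq D] [DecidableEq V]
    (b : D → V) (l : L) (t : H) :
    blockEquiv (axisEmbedding (U := U) b (splitEquiv (K := K) (G := G) (0, Pi.single (.inl l) t))) =
      (0, Pi.single (.inr l) t) := by
  refine Prod.ext (funext ?_) (funext ?_) <;> rintro (_ | _) <;>
    simp [axisEmbedding, axisHom, Pi.single_apply]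

theorem blockEquiv_axisEmbedding_single_inr [DecidableEq L] [DecidableEq D] [DecidableEq V]
    (b : D → V) (i : D) (t : H) :
    blockEquiv (axisEmbedding (U := U) b (splitEquiv (K := K) (G := G) (L := L)
      (0, Pi.single (.inr i) t))) = (0, Pi.single (.inl (i, b i)) t) := by
  refine Prod.ext (funext ?_) (funext ?_)
  · rintro (_ | _) <;> simp [axisEmbedding, axisHom]
  · rintro (⟨i', a⟩ | l)
    · obtain rfl | hi := eq_or_ne i' i <;>
        simp [axisEmbedding, axisHom, Pi.single_apply, *]
    · simp [axisEmbedding, axisHom]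

theorem splitEquiv_image_setOf_inr_mem (B : Set H) :
    splitEquiv '' {p : (K → G) × (L ⊕ D → H) | ∀ i, p.2 (.inr i) ∈ B} =
      univ ×ˢ univ.pi fun _ => B := by
  rw [show {p : (K → G) × (L ⊕ D → H) | ∀ i, p.2 (.inr i) ∈ B} =
    splitEquiv ⁻¹' (univ ×ˢ univ.pi fun _ => B) by ext; simp,
    image_preimage_eq _ splitEquiv.surjective]

variable [DecidableEq K] [DecidableEq L] [DecidableEq D] [DecidableEq U] [DecidableEq V]

theorem blockEquiv_image_axisEmbedding_mem_axisTiles {T : Set G} {A : Set H} (b : D → V)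
    {τ : Set ((K → G) × (L ⊕ D → H))} (hτ : τ ∈ axisTiles K (L ⊕ D) T A) :
    blockEquiv '' (axisEmbedding b '' (splitEquiv '' τ)) ∈
      axisTiles (D × U ⊕ K) (D × V ⊕ L) T A := by
  obtain ⟨k, rfl⟩ | ⟨l | i, rfl⟩ := hτ
  · simp only [image_image, blockEquiv_axisEmbedding_single_fst]
    exact .inl ⟨_, rfl⟩
  · simp only [image_image, blockEquiv_axisEmbedding_single_inl]
    exact .inr ⟨_, rfl⟩
  · simp only [image_image, blockEquiv_axisEmbedding_single_inr]
    exact .inr ⟨_, rfl⟩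

theorem tilableBy_axisTiles_blocks {T : Set G} {A B : Set H}
    (hB : TilableBy (axisTiles K (L ⊕ D) T A) {p | ∀ i, p.2 (.inr i) ∈ B})
    (hblock : TilableBy (axisTiles U V T B) univ) :
    TilableBy (axisTiles (D × U ⊕ K) (D × V ⊕ L) T A) univ := by
  have hsplit : TilableBy ((splitEquiv '' ·) '' axisTiles K (L ⊕ D) T A)
      (univ ×ˢ univ.pi fun _ => B) := by
    rw [← splitEquiv_image_setOf_inr_mem]
    exact hB.image_addEquiv splitEquiv fun _ => mem_image_of_mem _
  have hprod : TilableBy {τ | blockEquiv '' τ ∈ axisTiles (D × U ⊕ K) (D × V ⊕ L) T A}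
      ((univ : Set ((K → G) × (L → H))) ×ˢ
        univ.pi fun _ : D => (univ : Set ((U → G) × (V → H)))) := by
    refine TilableBy.prod_pi (ψ := fun _ => axisHom) (fun _ => axisHom_injective) hsplit
      (fun _ => hblock) ?_ ?_
    · rintro i _ ⟨a, rfl⟩
      simp only [mem_ofPred_eq, image_image, blockEquiv_single_fst]
      exact .inl ⟨_, rfl⟩
    · rintro b _ ⟨τ, hτ, rfl⟩
      exact blockEquiv_image_axisEmbedding_mem_axisTiles b hτ
  have himage := hprod.image_addEquiv blockEquiv (𝒮 := axisTiles _ _ T A) fun _ h => h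
  rwa [pi_univ, univ_prod_univ, image_univ_of_surjective blockEquiv.surjective] at himage

end Blocks

theorem tilingTransitive_general {K L D U V μ ι κ : Type*} [DecidableEq K] [DecidableEq U]
    [DecidableEq V] [DecidableEq μ] [DecidableEq ι] [DecidableEq κ] (T : Set G) (A B : Set H)
    (eμ : L ⊕ D ≃ μ) (eι : D × U ⊕ K ≃ ι) (eκ : D × V ⊕ L ≃ κ)
    (h1 : TilableD (G := Sum.elim (fun _ : K => G) fun _ : μ => H) (sumTiles T A)
      {z | ∀ i : D, z (.inr (eμ (.inr i))) ∈ B})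
    (h2 : TilableD (G := Sum.elim (fun _ : U => G) fun _ : V => H) (sumTiles T B) univ) :
    TilableD (G := Sum.elim (fun _ : ι => G) fun _ : κ => H) (sumTiles T A) univ := by
  classical
  rw [tilableD_sumTiles_iff (.refl U) (.refl V),
    image_univ_of_surjective (AddEquiv.surjective _)] at h2
  rw [tilableD_sumTiles_iff eι eκ, image_univ_of_surjective (AddEquiv.surjective _)]
  refine tilableBy_axisTiles_blocks (B := B) ?_ h2
  rw [← image_preimage_eq {p : (K → G) × (L ⊕ D → H) | ∀ i, p.2 (.inr i) ∈ B}
    (sumCoords (.refl K) eμ).surjective]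
  exact (tilableD_sumTiles_iff (.refl K) eμ T A _).1 h1

end Coordinates

theorem forall_finSumFinEquiv_inr_iff {m n : ℕ} {p : Fin (m + n) → Prop} :
    (∀ i : Fin n, p (finSumFinEquiv (.inr i))) ↔ ∀ j : Fin (m + n), m ≤ (j : ℕ) → p j := by
  refine ⟨fun hp j hj => ?_, fun hp i => hp _ (Nat.le_add_right m i)⟩
  induction j using Fin.addCases with
  | left i => exact absurd hj i.isLt.not_ge
  | right i => exact hp i

/-- if `G^k × H^ℓ × B^d` is `(T^{×k}, A^{×(ℓ+d)})`-tilable and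
`G^u × H^v` is `(T^{×u}, B^{×v})`-tilable, then `G^{du+k} × H^{dv+ℓ}` is
`(T^{×(du+k)}, A^{×(dv+ℓ)})`-tilable. -/
theorem tilingTransitive {G H : Type u} [AddCommGroup G] [AddCommGroup H]
    (T : Set G) (A B : Set H) (hAB : A ⊆ B)
    (k ℓ d u v : ℕ)
    (h1 : TilableD (G := Sum.elim (fun _ : Fin k => G) fun _ : Fin (ℓ + d) => H)
            (fun i => match i with
              | .inl _ => T
              | .inr _ => A)
            {z | ∀ j : Fin (ℓ + d), ℓ ≤ (j : ℕ) → z (.inr j) ∈ B})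
    (h2 : TilableD (G := Sum.elim (fun _ : Fin u => G) fun _ : Fin v => H)
            (fun i => match i with
              | .inl _ => T
              | .inr _ => B)
            Set.univ) :
    TilableD (G := Sum.elim (fun _ : Fin (d * u + k) => G)
                fun _ : Fin (d * v + ℓ) => H)
      (fun i => match i with
        | .inl _ => T
        | .inr _ => A)
      Set.univ := by
  let e (w m : ℕ) : Fin d × Fin w ⊕ Fin m ≃ Fin (d * w + m) :=
    (finProdFinEquiv.sumCongr (.refl _)).trans finSumFinEquiv
  simp only [← forall_finSumFinEquiv_inr_iff] at h1
  exact (tilingTransitive_general T A B finSumFinEquiv (e u k) (e v ℓ)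
    (h1.congr (Sum.rec (fun _ => rfl) fun _ => rfl))
    (h2.congr (Sum.rec (fun _ => rfl) fun _ => rfl))).congr (Sum.rec (fun _ => rfl) fun _ => rfl)
end

section
/- Let G and H be abelian groups, T ⊂ G a tile, and ρ : G → H a surjective homomorphism that is injective on T. If G^k × H^ℓ is (T^{×k}, ρ(T)^{×ℓ})-tilable, then G^{k+ℓ} can be partitioned into copies of T, where a copy of T is a translate of T placed in one of the k+ℓ coordinate directions. -/
universe u

/-! Let `φ : G^{k+ℓ} → G^k × H^ℓ` be the homomorphism that is the identity on the first `k`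
coordinates and `ρ` on the last `ℓ`. The preimage under `φ` of a piece based at `y`, be it a copy of
`T` or of `ρ(T)`, is the union of the copies of `T` in the same direction based at the points of the
fibre `φ⁻¹(y)`; they are pairwise disjoint because `ρ` is injective on `T`. So the preimages of the
pieces of a tiling of `G^k × H^ℓ` are tilable by copies of `T`, and they partition `G^{k+ℓ}`. -/

section

variable {ι κ : Type*} [DecidableEq ι] [DecidableEq κ] {G : κ → Type*} {H : ι → Type*}
  [∀ k, AddCommGroup (G k)] [∀ i, AddCommGroup (H i)]

/-- The copy of a subset `A` of the `i`-th factor in direction `i` based at `y`, that is,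
`y + ({0} × ⋯ × A × ⋯ × {0})`. Writing the copies of `IsCopyD` additively makes their behaviour
under homomorphisms transparent. -/
def axisCopy (i : ι) (A : Set (H i)) (y : ∀ i, H i) : Set (∀ i, H i) :=
  (fun a => y + Pi.single i a) '' A

theorem isCopyD_iff_exists_eq_axisCopy {T : ∀ i, Set (H i)} {S : Set (∀ i, H i)} :
    IsCopyD T S ↔ ∃ i y, S = axisCopy i (T i) y := by
  have update_eq (i : ι) (y : ∀ i, H i) (t : H i) :
      Function.update y i (y i + t) = y + Pi.single i t := by
    rw [Pi.update_eq_sub_add_single, Pi.single_add]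
    abel
  simp only [IsCopyD, axisCopy, update_eq, Set.image, eq_comm]

theorem isCopyD_axisCopy (T : ∀ i, Set (H i)) (i : ι) (y : ∀ i, H i) :
    IsCopyD T (axisCopy i (T i) y) :=
  isCopyD_iff_exists_eq_axisCopy.mpr ⟨i, y, rfl⟩

theorem IsCopyD.tilableD {T : ∀ i, Set (H i)} {S : Set (∀ i, H i)} (hS : IsCopyD T S) :
    TilableD T S :=
  ⟨{S}, by simpa using hS, Set.pairwiseDisjoint_singleton S id, Set.sUnion_singleton S⟩

theorem TilableD.biUnion {α : Type*} {T : ∀ i, Set (H i)} {s : Set α} {f : α → Set (∀ i, H i)}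
    (hf : s.PairwiseDisjoint f) (h : ∀ a ∈ s, TilableD T (f a)) :
    TilableD T (⋃ a ∈ s, f a) := by
  choose! P hcopy hdisj hcover using h
  have hunion : ∀ a ∈ s, ⨆ S ∈ P a, id S = f a := fun a ha => by
    rw [← hcover a ha, Set.sUnion_eq_biUnion]
    rfl
  refine ⟨⋃ a ∈ s, P a, ?_, ?_, ?_⟩
  · simp only [Set.mem_iUnion₂]
    rintro S ⟨a, ha, hS⟩
    exact hcopy a ha S hS
  · refine Set.PairwiseDisjoint.biUnion (fun a ha b hb hab => ?_) hdisj
    simpa only [Function.onFun, hunion a ha, hunion b hb] using hf ha hb hab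
  · simp only [Set.sUnion_iUnion]
    exact Set.iUnion₂_congr hcover

theorem preimage_axisCopy_image (φ : (∀ k, G k) →+ ∀ i, H i) {k : κ} {i : ι} {ρ : G k → H i}
    (hφ : ∀ t, φ (Pi.single k t) = Pi.single i (ρ t)) (A : Set (G k)) (y : ∀ i, H i) :
    φ ⁻¹' axisCopy i (ρ '' A) y = ⋃ z ∈ φ ⁻¹' {y}, axisCopy k A z := by
  ext w
  simp only [axisCopy, Set.mem_preimage, Set.mem_image, Set.mem_iUnion₂, Set.mem_singleton_iff,
    exists_exists_and_eq_and]
  constructor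
  · rintro ⟨t, ht, hw⟩
    refine ⟨w - Pi.single k t, ?_, t, ht, sub_add_cancel _ _⟩
    rw [map_sub, hφ, ← hw, add_sub_cancel_right]
  · rintro ⟨z, rfl, t, ht, rfl⟩
    exact ⟨t, ht, by rw [map_add, hφ]⟩

theorem pairwiseDisjoint_axisCopy_fiber (φ : (∀ k, G k) →+ ∀ i, H i) {k : κ} {i : ι}
    {ρ : G k → H i} (hφ : ∀ t, φ (Pi.single k t) = Pi.single i (ρ t)) {A : Set (G k)}
    (hρ : Set.InjOn ρ A) (y : ∀ i, H i) :
    (φ ⁻¹' {y}).PairwiseDisjoint (axisCopy k A) := by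
  rintro z (hz : φ z = y) z' (hz' : φ z' = y) hne
  refine Set.disjoint_left.mpr ?_
  rintro _ ⟨t, ht, rfl⟩ ⟨t', ht', heq : z' + Pi.single k t' = z + Pi.single k t⟩
  have himage : Pi.single i (ρ t') = Pi.single i (ρ t) := by
    simpa only [map_add, hφ, hz, hz', add_right_inj] using congrArg φ heq
  obtain rfl : t' = t := hρ ht' ht (Pi.single_injective i himage)
  exact hne (add_right_cancel heq).symm

theorem TilableD.preimage (φ : (∀ k, G k) →+ ∀ i, H i) {σ : ι → κ} {ρ : ∀ i, G (σ i) → H i}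
    (hφ : ∀ i t, φ (Pi.single (σ i) t) = Pi.single i (ρ i t)) {T : ∀ k, Set (G k)}
    (hρ : ∀ i, Set.InjOn (ρ i) (T (σ i))) {X : Set (∀ i, H i)}
    (h : TilableD (fun i => ρ i '' T (σ i)) X) :
    TilableD T (φ ⁻¹' X) := by
  obtain ⟨P, hcopy, hdisj, rfl⟩ := h
  rw [Set.preimage_sUnion]
  refine .biUnion (fun S hS S' hS' hne => (hdisj hS hS' hne).preimage φ) fun S hS => ?_
  obtain ⟨i, y, rfl⟩ := isCopyD_iff_exists_eq_axisCopy.mp (hcopy S hS)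
  rw [preimage_axisCopy_image φ (hφ i)]
  exact .biUnion (pairwiseDisjoint_axisCopy_fiber φ (hφ i) (hρ i) y)
    fun z _ => (isCopyD_axisCopy T (σ i) z).tilableD

/-- The homomorphism `z ↦ (ρ i (z (σ i)))ᵢ` of product groups, which applies `ρ i` to the
coordinate `σ i`; tilings of its codomain are pulled back along it. -/
def coordinateHom (σ : ι → κ) (ρ : ∀ i, G (σ i) →+ H i) : (∀ k, G k) →+ ∀ i, H i :=
  AddMonoidHom.pi fun i => (ρ i).comp (Pi.evalAddMonoidHom G (σ i))

theorem coordinateHom_single {σ : ι → κ} (hσ : Function.Injective σ) (ρ : ∀ i, G (σ i) →+ H i)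
    (i : ι) (t : G (σ i)) :
    coordinateHom σ ρ (Pi.single (σ i) t) = Pi.single i (ρ i t) := by
  ext i'
  change ρ i' (Pi.single (σ i) t (σ i')) = Pi.single i (ρ i t) i'
  obtain rfl | hne := eq_or_ne i' i
  · simp only [Pi.single_eq_same]
  · rw [Pi.single_eq_of_ne (hσ.ne hne), Pi.single_eq_of_ne hne, map_zero]

theorem TilableD.univ_of_image {σ : ι → κ} (hσ : Function.Injective σ) (ρ : ∀ i, G (σ i) →+ H i)
    {T : ∀ k, Set (G k)} (hρ : ∀ i, Set.InjOn (ρ i) (T (σ i)))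
    (h : TilableD (fun i => ρ i '' T (σ i)) Set.univ) :
    TilableD T Set.univ :=
  h.preimage (coordinateHom σ ρ) (coordinateHom_single hσ ρ) hρ

end

theorem completeLifting_general {α β γ : Type*} [DecidableEq α] [DecidableEq β] [DecidableEq γ]
    {G H : Type u} [AddCommGroup G] [AddCommGroup H] (T : Set G) (ρ : G →+ H)
    (hinj : Set.InjOn ρ T) {σ : α ⊕ β → γ} (hσ : Function.Injective σ)
    (h : TilableD (G := Sum.elim (fun _ : α => G) fun _ : β => H)
          (fun i => match i with
            | .inl _ => T
            | .inr _ => ρ '' T)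
          Set.univ) :
    TilableD (G := fun _ : γ => G) (fun _ => T) Set.univ := by
  let ρ' : ∀ i : α ⊕ β, G →+ Sum.elim (fun _ : α => G) (fun _ : β => H) i := fun i =>
    match i with
    | .inl _ => AddMonoidHom.id G
    | .inr _ => ρ
  refine TilableD.univ_of_image hσ ρ' (fun i => ?_) ?_
  · cases i
    exacts [Function.injective_id.injOn, hinj]
  · convert h using 1
    funext i
    cases i
    exacts [Set.image_id T, rfl]

/-- if `ρ : G → H` is a surjective homomorphism injective on `T`
and `G^k × H^ℓ` is `(T^{×k}, ρ(T)^{×ℓ})`-tilable, then `G^{k+ℓ}` partitions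
into copies of `T` placed in the coordinate directions. -/
theorem completeLifting {G H : Type u} [AddCommGroup G] [AddCommGroup H]
    (T : Set G) (ρ : G →+ H) (hsurj : Function.Surjective ρ)
    (hinj : Set.InjOn ρ T) (k ℓ : ℕ)
    (h : TilableD (G := Sum.elim (fun _ : Fin k => G) fun _ : Fin ℓ => H)
          (fun i => match i with
            | .inl _ => T
            | .inr _ => ρ '' T)
          Set.univ) :
    TilableD (G := fun _ : Fin (k + ℓ) => G) (fun _ => T) Set.univ := by
  refine completeLifting_general T ρ hinj finSumFinEquiv.injective ?_
  convert h using 2 with i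
  cases i <;> rfl
end
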